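/- (Intrinsic torsion formula, pointwise form of Proposition 3.3.) Let φ ∈ Δ be a unit spinor, S ∈ End(ℝ^6) and η a linear functional on ℝ^6. Then for every x ∈ ℝ^6: S(x)·φ + η(x)·j(φ) = (1/2)·((S(x))⌟ψ_φ)·φ − (1/3)·η(x)·(ω_φ·φ), where (S(x))⌟ψ_φ is the bilinear form (y,z) ↦ ψ_φ(S(x),y,z). In other words, the spinorial field equation ∇φ = η⊗j(φ) + S·φ is realised by Clifford action of the 1-form with values in su(3)^⊥ given by S⌟ψ_φ − (2/3)η⊗ω_φ, acting with the factor 1/2. -/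

import Mathlib

open RealInnerProductSpace

noncomputable section

/-- The spin representation space Δ = ℝ^8. -/
abbrev Δ : Type := EuclideanSpace ℝ (Fin 8)

/-- The standard skew endomorphism E_{ij} of ℝ^8: u_i ↦ u_j, u_j ↦ -u_i, others ↦ 0. -/
def E (i j : Fin 8) : Δ →ₗ[ℝ] Δ where
  toFun v := v i • EuclideanSpace.single j (1 : ℝ) - v j • EuclideanSpace.single i (1 : ℝ)
  map_add' x y := by
    simp only [PiLp.add_apply, add_smul]
    module
  map_smul' c x := by
    simp only [PiLp.smul_apply, smul_eq_mul, RingHom.id_apply, mul_smul]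
    module

/-- The seven Clifford endomorphisms e_1, …, e_7 (indexed 0,…,6). -/
def cliff : Fin 7 → (Δ →ₗ[ℝ] Δ) :=
  ![  E 0 7 + E 1 6 - E 2 5 - E 3 4,
    - E 0 6 + E 1 7 + E 2 4 - E 3 5,
    - E 0 5 + E 1 4 - E 2 7 + E 3 6,
    - E 0 4 - E 1 5 - E 2 6 - E 3 7,
    - E 0 2 - E 1 3 + E 4 6 + E 5 7,
      E 0 3 - E 1 2 - E 4 7 + E 5 6,
      E 0 1 - E 2 3 - E 4 5 + E 6 7]

/-- j = e_1 ∘ e_2 ∘ e_3 ∘ e_4 ∘ e_5 ∘ e_6. -/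
def jmap : Δ →ₗ[ℝ] Δ :=
  cliff 0 ∘ₗ cliff 1 ∘ₗ cliff 2 ∘ₗ cliff 3 ∘ₗ cliff 4 ∘ₗ cliff 5

/-- Clifford multiplication of a vector x ∈ ℝ^6 on a spinor. -/
def cm6 (x : EuclideanSpace ℝ (Fin 6)) (φ : Δ) : Δ :=
  ∑ i : Fin 6, x i • cliff i.castSucc φ

/-- Clifford multiplication of a vector x ∈ ℝ^7 on a spinor. -/
def cm7 (x : EuclideanSpace ℝ (Fin 7)) (φ : Δ) : Δ :=
  ∑ i : Fin 7, x i • cliff i φ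


/-- Standard basis vector of ℝ^6. -/
def v6 (i : Fin 6) : EuclideanSpace ℝ (Fin 6) := EuclideanSpace.single i (1 : ℝ)

/-- The 3-form ψ_φ(x,y,z) = -⟨x·y·z·φ, φ⟩ on ℝ^6. -/
def psiP (φ : Δ) (x y z : EuclideanSpace ℝ (Fin 6)) : ℝ :=
  -⟪cm6 x (cm6 y (cm6 z φ)), φ⟫

/-- The 3-form ψ_φ⁻(x,y,z) = -⟨x·y·z·φ, j(φ)⟩ on ℝ^6. -/
def psiM (φ : Δ) (x y z : EuclideanSpace ℝ (Fin 6)) : ℝ :=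
  -⟪cm6 x (cm6 y (cm6 z φ)), jmap φ⟫

/-- Action of a trilinear form on ℝ^6 on a spinor:
τ·χ := Σ_{i<j<k} τ(v_i,v_j,v_k) e_i(e_j(e_k(χ))). -/
def tact6 (τ : EuclideanSpace ℝ (Fin 6) → EuclideanSpace ℝ (Fin 6) →
    EuclideanSpace ℝ (Fin 6) → ℝ) (χ : Δ) : Δ :=
  ∑ i : Fin 6, ∑ j : Fin 6, ∑ k : Fin 6,
    if i < j ∧ j < k then
      τ (v6 i) (v6 j) (v6 k) • cliff i.castSucc (cliff j.castSucc (cliff k.castSucc χ))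
    else 0

/-- Action of a bilinear form on ℝ^6 on a spinor:
σ·χ := Σ_{i<j} σ(v_i,v_j) e_i(e_j(χ)). -/
def bact6 (σ : EuclideanSpace ℝ (Fin 6) → EuclideanSpace ℝ (Fin 6) → ℝ) (χ : Δ) : Δ :=
  ∑ i : Fin 6, ∑ j : Fin 6,
    if i < j then σ (v6 i) (v6 j) • cliff i.castSucc (cliff j.castSucc χ) else 0

/-!
The endomorphisms `e₁, …, e₇` are skew, square to `-1` and anticommute, and `j = -e₇`. Hence for
every unit spinor `φ` the eight spinors `φ, jφ, e₁φ, …, e₆φ` form an orthonormal basis of `Δ`, so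
that every spinor `χ` equals `⟨φ, χ⟩φ + ⟨jφ, χ⟩jφ + ∑ᵢ ⟨eᵢφ, χ⟩eᵢφ`. Expanding `eᵢχ` in this basis,
applying `eᵢ` again and summing over `i` evaluates the action on `φ` of the 2-form
`⟨y·z·φ, χ⟩`, namely `∑_{i<j} ⟨eᵢeⱼφ, χ⟩ eᵢeⱼφ = 2(χ - ⟨φ, χ⟩φ) + ⟨jφ, χ⟩jφ`.
Both `a⌟ψ_φ` and `ω_φ` have this shape, with `χ = a·φ` and `χ = -jφ`; therefore
`(a⌟ψ_φ)·φ = 2 a·φ` and `ω_φ·φ = -3 jφ`.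
-/

theorem sum_diag_add_two_nsmul_sum_lt {ι M : Type*} [Fintype ι] [LinearOrder ι] [AddCommMonoid M]
    (f : ι → ι → M) (hf : ∀ i j, f i j = f j i) :
    ∑ i, f i i + 2 • ∑ i, ∑ j, (if i < j then f i j else 0) = ∑ i, ∑ j, f i j := by
  have hsplit (i j : ι) : f i j = (if i = j then f i j else 0) +
      ((if i < j then f i j else 0) + if j < i then f i j else 0) := by
    rcases lt_trichotomy i j with h | rfl | h <;> simp [*, ne_of_lt, ne_of_gt, not_lt_of_gt]
  have hdiag : ∑ i, ∑ j, (if i = j then f i j else 0) = ∑ i, f i i := by simp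
  have hswap : ∑ i, ∑ j, (if j < i then f i j else 0) =
      ∑ i, ∑ j, if i < j then f i j else 0 := by
    rw [Finset.sum_comm]
    simp only [hf]
  calc ∑ i, f i i + 2 • ∑ i, ∑ j, (if i < j then f i j else 0)
      = ∑ i, ∑ j, ((if i = j then f i j else 0) +
          ((if i < j then f i j else 0) + if j < i then f i j else 0)) := by
        simp only [Finset.sum_add_distrib, hdiag, hswap, two_nsmul]
    _ = ∑ i, ∑ j, f i j := by simp only [← hsplit]

/-- A family of skew endomorphisms of a real inner product space that square to `-1` and pairwise
anticommute: the images of an orthonormal basis under an orthogonal representation of the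
negative definite Clifford algebra. -/
structure IsCliffordSystem {ι V : Type*} [NormedAddCommGroup V] [InnerProductSpace ℝ V]
    (e : ι → V →ₗ[ℝ] V) : Prop where
  skew : ∀ i v w, ⟪e i v, w⟫ = -⟪v, e i w⟫
  apply_apply_self : ∀ i v, e i (e i v) = -v
  anticomm : ∀ i j v, i ≠ j → e i (e j v) = -e j (e i v)

namespace IsCliffordSystem

variable {ι V : Type*} [NormedAddCommGroup V] [InnerProductSpace ℝ V]

section Frame

variable {e : ι → V →ₗ[ℝ] V}

theorem norm_apply (he : IsCliffordSystem e) (i : ι) (v : V) : ‖e i v‖ = ‖v‖ := by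
  rw [norm_eq_sqrt_real_inner, he.skew, he.apply_apply_self, inner_neg_right, neg_neg,
    ← norm_eq_sqrt_real_inner]

theorem inner_self_apply (he : IsCliffordSystem e) (i : ι) (v : V) : ⟪v, e i v⟫ = 0 := by
  have h := he.skew i v v
  rw [real_inner_comm] at h
  linarith

theorem inner_apply_apply_of_ne (he : IsCliffordSystem e) {i j : ι} (hij : i ≠ j) (v : V) :
    ⟪e i v, e j v⟫ = 0 := by
  have h : ⟪e i v, e j v⟫ = -⟪e i v, e j v⟫ := by
    calc ⟪e i v, e j v⟫ = ⟪v, e j (e i v)⟫ := by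
          rw [he.skew, he.anticomm i j v hij, inner_neg_right, neg_neg]
      _ = -⟪e i v, e j v⟫ := by rw [real_inner_comm, ← he.skew]
  linarith

theorem orthonormal_apply (he : IsCliffordSystem e) {φ : V} (hφ : ‖φ‖ = 1) :
    Orthonormal ℝ fun i => e i φ :=
  ⟨fun i => (he.norm_apply i φ).trans hφ, fun _ _ hij => he.inner_apply_apply_of_ne hij φ⟩

theorem orthonormal_option_elim (he : IsCliffordSystem e) {φ : V} (hφ : ‖φ‖ = 1) :
    Orthonormal ℝ fun o : Option ι => o.elim φ fun i => e i φ := by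
  refine ⟨?_, ?_⟩
  · rintro (_ | i)
    exacts [hφ, (he.norm_apply i φ).trans hφ]
  · rintro (_ | i) (_ | j) hij
    · exact absurd rfl hij
    · exact he.inner_self_apply j φ
    · exact (real_inner_comm _ _).trans (he.inner_self_apply i φ)
    · exact he.inner_apply_apply_of_ne (fun h => hij (congrArg some h)) φ

theorem inner_smul_add_sum_inner_smul [Fintype ι] (he : IsCliffordSystem e)
    (hV : Module.finrank ℝ V = Fintype.card ι + 1) {φ : V} (hφ : ‖φ‖ = 1) (χ : V) :
    ⟪φ, χ⟫ • φ + ∑ i, ⟪e i φ, χ⟫ • e i φ = χ := by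
  have horth := he.orthonormal_option_elim hφ
  let b := basisOfOrthonormalOfCardEqFinrank horth (by rw [Fintype.card_option, hV])
  have hb : ⇑b = fun o : Option ι => o.elim φ fun i => e i φ :=
    coe_basisOfOrthonormalOfCardEqFinrank ..
  have hexpand := (b.toOrthonormalBasis (hb ▸ horth)).sum_repr' χ
  simpa only [Module.Basis.coe_toOrthonormalBasis, hb, Fintype.sum_option, Option.elim_none,
    Option.elim_some] using hexpand

end Frame

section Gram

variable {n : ℕ} {e : Fin (n + 1) → V →ₗ[ℝ] V}

theorem sum_castSucc_inner_smul (he : IsCliffordSystem e) (hV : Module.finrank ℝ V = n + 2)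
    {φ : V} (hφ : ‖φ‖ = 1) (χ : V) :
    ∑ i : Fin n, ⟪e i.castSucc φ, χ⟫ • e i.castSucc φ =
      χ - ⟪φ, χ⟫ • φ - ⟪e (Fin.last n) φ, χ⟫ • e (Fin.last n) φ := by
  have h := he.inner_smul_add_sum_inner_smul (by rw [hV, Fintype.card_fin]) hφ χ
  rw [Fin.sum_univ_castSucc] at h
  nth_rw 2 [← h]
  abel

theorem sum_castSucc_inner_smul_apply (he : IsCliffordSystem e)
    (hV : Module.finrank ℝ V = n + 2) {φ : V} (hφ : ‖φ‖ = 1) (χ : V) (i : Fin (n + 1)) :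
    ∑ j : Fin n, ⟪e i (e j.castSucc φ), χ⟫ • e i (e j.castSucc φ) =
      χ - ⟪e i φ, χ⟫ • e i φ - ⟪e i (e (Fin.last n) φ), χ⟫ • e i (e (Fin.last n) φ) := by
  have h := congrArg (e i) (he.sum_castSucc_inner_smul hV hφ (-e i χ))
  simpa only [map_sum, map_sub, map_smul, map_neg, he.apply_apply_self, neg_neg, inner_neg_right,
    ← he.skew] using h

theorem sum_sum_castSucc_inner_smul (he : IsCliffordSystem e)
    (hV : Module.finrank ℝ V = n + 2) {φ : V} (hφ : ‖φ‖ = 1) (χ : V) :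
    ∑ i : Fin n, ∑ j : Fin n,
        ⟪e i.castSucc (e j.castSucc φ), χ⟫ • e i.castSucc (e j.castSucc φ) =
      (n - 2 : ℝ) • χ + (2 * ⟪φ, χ⟫) • φ +
        (2 * ⟪e (Fin.last n) φ, χ⟫) • e (Fin.last n) φ := by
  have hlast : ‖e (Fin.last n) φ‖ = 1 := (he.norm_apply _ φ).trans hφ
  simp only [he.sum_castSucc_inner_smul_apply hV hφ, Finset.sum_sub_distrib,
    he.sum_castSucc_inner_smul hV hφ, he.sum_castSucc_inner_smul hV hlast, he.apply_apply_self,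
    inner_neg_left, smul_neg, neg_smul, neg_neg, Finset.sum_const, Finset.card_univ,
    Fintype.card_fin, ← Nat.cast_smul_eq_nsmul ℝ]
  module

theorem sum_lt_castSucc_inner_smul (he : IsCliffordSystem e)
    (hV : Module.finrank ℝ V = n + 2) {φ : V} (hφ : ‖φ‖ = 1) (χ : V) :
    ∑ i : Fin n, ∑ j : Fin n, (if i < j then
        ⟪e i.castSucc (e j.castSucc φ), χ⟫ • e i.castSucc (e j.castSucc φ) else 0) =
      (n / 2 - 1 : ℝ) • (χ - ⟪φ, χ⟫ • φ) + ⟪e (Fin.last n) φ, χ⟫ • e (Fin.last n) φ := by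
  have hsymm (i j : Fin n) :
      ⟪e i.castSucc (e j.castSucc φ), χ⟫ • e i.castSucc (e j.castSucc φ) =
        ⟪e j.castSucc (e i.castSucc φ), χ⟫ • e j.castSucc (e i.castSucc φ) := by
    rcases eq_or_ne i j with rfl | hij
    · rfl
    · rw [he.anticomm _ _ φ ((Fin.castSucc_injective n).ne hij), inner_neg_left, neg_smul_neg]
  have hdiag : ∑ i : Fin n,
      ⟪e i.castSucc (e i.castSucc φ), χ⟫ • e i.castSucc (e i.castSucc φ) =
        (n * ⟪φ, χ⟫) • φ := by
    simp [he.apply_apply_self, mul_smul, Nat.cast_smul_eq_nsmul]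
  have htotal := sum_diag_add_two_nsmul_sum_lt _ hsymm
  rw [hdiag, he.sum_sum_castSucc_inner_smul hV hφ, ← Nat.cast_smul_eq_nsmul ℝ, Nat.cast_ofNat,
    ← eq_sub_iff_add_eq'] at htotal
  rw [← smul_right_inj (two_ne_zero' ℝ), htotal]
  module

end Gram

end IsCliffordSystem

theorem E_apply (i j : Fin 8) (v : Δ) (k : Fin 8) :
    E i j v k = (if k = j then v i else 0) - if k = i then v j else 0 := by
  simp [E]

theorem inner_E_left (i j : Fin 8) (v w : Δ) : ⟪E i j v, w⟫ = -⟪v, E i j w⟫ := by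
  simp [E, inner_sub_left, inner_sub_right, inner_smul_left, inner_smul_right,
    EuclideanSpace.inner_single_left, EuclideanSpace.inner_single_right, mul_comm]

/-- Each `cliff i` permutes the coordinates of a spinor up to sign; with the coordinates `0, …, 7`
written in binary, the permutation is the bitwise exclusive or with `cliffMask i`. -/
def cliffMask : Fin 7 → Fin 8 := ![7, 6, 5, 4, 2, 3, 1]

/-- The sign with which the coordinate `k ^^^ cliffMask i` of a spinor `v` enters the coordinate
`k` of `cliff i v`; integer valued, so that the Clifford relations can be decided. -/
def cliffSign : Fin 7 → Fin 8 → ℤ :=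
  ![![-1, -1, 1, 1, -1, -1, 1, 1],
    ![1, -1, -1, 1, 1, -1, -1, 1],
    ![1, -1, 1, -1, 1, -1, 1, -1],
    ![1, 1, 1, 1, -1, -1, -1, -1],
    ![1, 1, -1, -1, -1, -1, 1, 1],
    ![-1, 1, -1, 1, 1, -1, 1, -1],
    ![-1, 1, 1, -1, 1, -1, -1, 1]]

theorem cliff_apply (i : Fin 7) (v : Δ) (k : Fin 8) :
    cliff i v k = cliffSign i k * v (k ^^^ cliffMask i) := by
  fin_cases i <;> fin_cases k <;> simp [cliff, E_apply, cliffSign, cliffMask]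

theorem cliff_cliff_apply (i j : Fin 7) (v : Δ) (k : Fin 8) :
    cliff i (cliff j v) k = (cliffSign i k * cliffSign j (k ^^^ cliffMask i) : ℤ) *
      v (k ^^^ cliffMask i ^^^ cliffMask j) := by
  rw [cliff_apply, cliff_apply, Int.cast_mul, mul_assoc]

theorem inner_cliff_left (i : Fin 7) (v w : Δ) : ⟪cliff i v, w⟫ = -⟪v, cliff i w⟫ := by
  fin_cases i <;>
    simp [cliff, inner_add_left, inner_sub_left, inner_add_right, inner_sub_right,
      inner_E_left] <;>
    ring

theorem cliff_cliff_self (i : Fin 7) (v : Δ) : cliff i (cliff i v) = -v := by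
  have hmask : ∀ i k, k ^^^ cliffMask i ^^^ cliffMask i = k := by decide
  have hsign : ∀ i k, cliffSign i k * cliffSign i (k ^^^ cliffMask i) = -1 := by decide
  ext k
  simp [cliff_cliff_apply, hmask, hsign]

theorem cliff_cliff_of_ne (i j : Fin 7) (v : Δ) (hij : i ≠ j) :
    cliff i (cliff j v) = -cliff j (cliff i v) := by
  have hmask : ∀ i j k, k ^^^ cliffMask i ^^^ cliffMask j =
      k ^^^ cliffMask j ^^^ cliffMask i := by decide
  have hsign : ∀ i j k, i ≠ j → cliffSign i k * cliffSign j (k ^^^ cliffMask i) =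
      -(cliffSign j k * cliffSign i (k ^^^ cliffMask j)) := by decide
  ext k
  rw [PiLp.neg_apply, cliff_cliff_apply, cliff_cliff_apply, hmask, hsign i j k hij, Int.cast_neg,
    neg_mul]

theorem isCliffordSystem_cliff : IsCliffordSystem cliff :=
  ⟨inner_cliff_left, cliff_cliff_self, cliff_cliff_of_ne⟩

theorem jmap_eq_neg_cliff_last : jmap = -cliff (Fin.last 6) := by
  ext v k
  fin_cases k <;> simp [jmap, cliff_apply, cliffMask, cliffSign]

theorem cm6_v6 (i : Fin 6) (v : Δ) : cm6 (v6 i) v = cliff i.castSucc v := by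
  simp [cm6, v6]

theorem inner_cm6_left (a : EuclideanSpace ℝ (Fin 6)) (v w : Δ) :
    ⟪cm6 a v, w⟫ = -⟪v, cm6 a w⟫ := by
  simp [cm6, sum_inner, inner_sum, inner_smul_left, inner_smul_right, inner_cliff_left]

theorem inner_cm6_cm6 {φ : Δ} (hφ : ‖φ‖ = 1) (x y : EuclideanSpace ℝ (Fin 6)) :
    ⟪cm6 x φ, cm6 y φ⟫ = ⟪x, y⟫ := by
  have horth := (isCliffordSystem_cliff.orthonormal_apply hφ).comp _ (Fin.castSucc_injective 6)
  calc ⟪cm6 x φ, cm6 y φ⟫ = ∑ i, x i * y i := horth.inner_sum x y Finset.univ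
    _ = ⟪x, y⟫ := by simp [PiLp.inner_apply, mul_comm]

theorem inner_self_cm6 (a : EuclideanSpace ℝ (Fin 6)) (φ : Δ) : ⟪φ, cm6 a φ⟫ = 0 := by
  simp [cm6, inner_sum, inner_smul_right, isCliffordSystem_cliff.inner_self_apply]

theorem inner_jmap_left (v w : Δ) : ⟪jmap v, w⟫ = -⟪v, jmap w⟫ := by
  simp [jmap_eq_neg_cliff_last, inner_cliff_left]

theorem inner_self_jmap (φ : Δ) : ⟪φ, jmap φ⟫ = 0 := by
  simp [jmap_eq_neg_cliff_last, isCliffordSystem_cliff.inner_self_apply]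

theorem norm_jmap (φ : Δ) : ‖jmap φ‖ = ‖φ‖ := by
  simp [jmap_eq_neg_cliff_last, isCliffordSystem_cliff.norm_apply]

theorem inner_jmap_cliff_castSucc (i : Fin 6) (φ : Δ) : ⟪jmap φ, cliff i.castSucc φ⟫ = 0 := by
  rw [jmap_eq_neg_cliff_last, LinearMap.neg_apply, inner_neg_left,
    isCliffordSystem_cliff.inner_apply_apply_of_ne (Fin.castSucc_ne_last i).symm, neg_zero]

theorem inner_jmap_cm6 (a : EuclideanSpace ℝ (Fin 6)) (φ : Δ) : ⟪jmap φ, cm6 a φ⟫ = 0 := by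
  simp [cm6, inner_sum, inner_smul_right, inner_jmap_cliff_castSucc]

theorem cliff_castSucc_jmap (i : Fin 6) (v : Δ) :
    cliff i.castSucc (jmap v) = -jmap (cliff i.castSucc v) := by
  rw [jmap_eq_neg_cliff_last, LinearMap.neg_apply, LinearMap.neg_apply, map_neg,
    cliff_cliff_of_ne _ _ v (Fin.castSucc_ne_last i)]

theorem cm6_jmap (a : EuclideanSpace ℝ (Fin 6)) (v : Δ) : cm6 a (jmap v) = -jmap (cm6 a v) := by
  simp [cm6, cliff_castSucc_jmap]

theorem bact6_inner_cm6_cm6 {φ : Δ} (hφ : ‖φ‖ = 1) (χ : Δ) :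
    bact6 (fun y z => ⟪cm6 y (cm6 z φ), χ⟫) φ =
      (2 : ℝ) • (χ - ⟪φ, χ⟫ • φ) + ⟪jmap φ, χ⟫ • jmap φ := by
  have h := isCliffordSystem_cliff.sum_lt_castSucc_inner_smul finrank_euclideanSpace_fin hφ χ
  have hcoeff : (((6 : ℕ) : ℝ) / 2 - 1) = 2 := by norm_num
  rw [hcoeff] at h
  simpa only [bact6, cm6_v6, jmap_eq_neg_cliff_last, LinearMap.neg_apply, inner_neg_left,
    neg_smul_neg] using h

theorem psiP_eq_inner_cm6_cm6 (φ : Δ) (a y z : EuclideanSpace ℝ (Fin 6)) :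
    psiP φ a y z = ⟪cm6 y (cm6 z φ), cm6 a φ⟫ := by
  rw [psiP, inner_cm6_left, neg_neg]

theorem bact6_psiP {φ : Δ} (hφ : ‖φ‖ = 1) (a : EuclideanSpace ℝ (Fin 6)) :
    bact6 (fun y z => psiP φ a y z) φ = (2 : ℝ) • cm6 a φ := by
  simp only [psiP_eq_inner_cm6_cm6, bact6_inner_cm6_cm6 hφ, inner_self_cm6, inner_jmap_cm6,
    zero_smul, sub_zero, add_zero]

section Omega

variable {φ : Δ} {J : EuclideanSpace ℝ (Fin 6) → EuclideanSpace ℝ (Fin 6)}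

theorem omega_eq_inner_cm6_cm6 (hφ : ‖φ‖ = 1)
    (hJ : ∀ x, jmap (cm6 x φ) = cm6 (J x) φ) (y z : EuclideanSpace ℝ (Fin 6)) :
    ⟪y, J z⟫ = ⟪cm6 y (cm6 z φ), -jmap φ⟫ :=
  calc ⟪y, J z⟫ = ⟪cm6 y φ, jmap (cm6 z φ)⟫ := by rw [hJ, inner_cm6_cm6 hφ]
    _ = -⟪cm6 z φ, jmap (cm6 y φ)⟫ := by rw [real_inner_comm, inner_jmap_left]
    _ = ⟪cm6 z φ, cm6 y (jmap φ)⟫ := by rw [cm6_jmap, inner_neg_right]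
    _ = ⟪cm6 y (cm6 z φ), -jmap φ⟫ := by rw [inner_neg_right, inner_cm6_left y, neg_neg]

theorem bact6_omega (hφ : ‖φ‖ = 1)
    (hJ : ∀ x, jmap (cm6 x φ) = cm6 (J x) φ) :
    bact6 (fun y z => ⟪y, J z⟫) φ = (-3 : ℝ) • jmap φ := by
  simp only [omega_eq_inner_cm6_cm6 hφ hJ]
  rw [bact6_inner_cm6_cm6 hφ, inner_neg_right, inner_neg_right, inner_self_jmap,
    real_inner_self_eq_norm_sq, norm_jmap, hφ]
  module

end Omega

/-- Intrinsic torsion formula (pointwise form of Proposition 3.3):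
S(x)·φ + η(x)·j(φ) = (1/2)((S x)⌟ψ_φ)·φ - (1/3)η(x)(ω_φ·φ),
where ω_φ(x,y) = ⟨x, J_φ y⟩ and J_φ is the unique linear map with
j(x·φ) = (J_φ x)·φ. -/
theorem intrinsic_torsion_formula (φ : Δ) (hφ : ⟪φ, φ⟫ = 1)
    (J : EuclideanSpace ℝ (Fin 6) →ₗ[ℝ] EuclideanSpace ℝ (Fin 6))
    (hJ : ∀ x : EuclideanSpace ℝ (Fin 6), jmap (cm6 x φ) = cm6 (J x) φ)
    (S : EuclideanSpace ℝ (Fin 6) →ₗ[ℝ] EuclideanSpace ℝ (Fin 6))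
    (η : EuclideanSpace ℝ (Fin 6) →ₗ[ℝ] ℝ) :
    ∀ x : EuclideanSpace ℝ (Fin 6),
      cm6 (S x) φ + η x • jmap φ =
        (1 / 2 : ℝ) • bact6 (fun y z => psiP φ (S x) y z) φ -
          ((1 / 3 : ℝ) * η x) • bact6 (fun y z => ⟪y, J z⟫) φ := by
  intro x
  have hnorm : ‖φ‖ = 1 := by rw [norm_eq_sqrt_real_inner, hφ, Real.sqrt_one]
  rw [bact6_psiP hnorm, bact6_omega hnorm hJ]
  module

end
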